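/- Let n ≥ 0, s ≥ 0 and ψ ∈ [0,π], and let γ : ℝ → ℂ^{n+1} be a unit-speed magnetic geodesic of strength s with contact angle ψ, i.e. γ''(t) − i·s·γ'(t) + (1 − s·cos ψ)·γ(t) = 0 for all t, with |γ(0)| = 1, |γ'(0)| = 1, Re⟨γ(0),γ'(0)⟩ = 0, Re⟨i·γ(0),γ'(0)⟩ = cos ψ. Then there exists a complex-linear subspace V ⊆ ℂ^{n+1} with complex dimension at most 2 (namely the complex span of γ(0) and γ'(0)) such that γ(t) ∈ V and |γ(t)| = 1 for every t ∈ ℝ. In particular, every magnetic geodesic of (S^{2n+1}, g, s·dα) is contained in the intersection of S^{2n+1} with a complex plane, which is a 3-sphere (or a circle). -/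

import Mathlib

noncomputable section

open scoped Real

/-- Hermitian product on `ℂ^{n+1}`, ℂ-linear in the first argument and
conjugate-linear in the second (paper convention). -/
def herm {n : ℕ} (x y : EuclideanSpace ℂ (Fin (n + 1))) : ℂ := inner ℂ y x

/-- Norm of the point `C_s(ψ) = (−s/2 + cos ψ, sin ψ) ∈ ℝ²`, i.e.
`|C_s(ψ)| = sqrt(s²/4 + 1 − s cos ψ)`. -/
def normC (s ψ : ℝ) : ℝ := Real.sqrt (s ^ 2 / 4 + 1 - s * Real.cos ψ)

/-- Angle of `C_s(ψ)` with the positive x-axis: the unique `τ ∈ [0,π]` with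
`cos τ = (−s/2 + cos ψ)/|C_s(ψ)|`. -/
def argC (s ψ : ℝ) : ℝ := Real.arccos ((-s / 2 + Real.cos ψ) / normC s ψ)

/-- `γ` is a unit-speed magnetic geodesic of strength `s` with contact angle `ψ`,
in the paper's ambient-space formulation: `γ'' − i·s·γ' + (1 − s·cos ψ)·γ = 0`,
`|γ(0)| = 1`, `|γ'(0)| = 1`, `Re⟨γ(0),γ'(0)⟩ = 0`, `Re⟨i·γ(0),γ'(0)⟩ = cos ψ`. -/
def IsMagGeo {n : ℕ} (s ψ : ℝ) (γ : ℝ → EuclideanSpace ℂ (Fin (n + 1))) : Prop :=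
  ContDiff ℝ (⊤ : ℕ∞) γ ∧
  (∀ t : ℝ, deriv (deriv γ) t - ((s : ℂ) * Complex.I) • deriv γ t
      + ((1 : ℂ) - (s : ℂ) * (Real.cos ψ : ℂ)) • γ t = 0) ∧
  ‖γ 0‖ = 1 ∧ ‖deriv γ 0‖ = 1 ∧ (herm (γ 0) (deriv γ 0)).re = 0 ∧
  (herm (Complex.I • γ 0) (deriv γ 0)).re = Real.cos ψ

/-- The curve `γ(t) = e^{i s t/2}(e^{−i|C_s(ψ)|t} w₀ + e^{i|C_s(ψ)|t} w₁)`. -/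
def magCurve {n : ℕ} (s ψ : ℝ) (w₀ w₁ : EuclideanSpace ℂ (Fin (n + 1))) (t : ℝ) :
    EuclideanSpace ℂ (Fin (n + 1)) :=
  Complex.exp (Complex.I * s * t / 2) •
    (Complex.exp (-(Complex.I * normC s ψ * t)) • w₀ +
     Complex.exp (Complex.I * normC s ψ * t) • w₁)

/-- The Clifford torus `𝕋²_{w₀,w₁} = {λ₀ w₀ + λ₁ w₁ : |λ₀| = |λ₁| = 1}`. -/
def cliffordTorus {n : ℕ} (w₀ w₁ : EuclideanSpace ℂ (Fin (n + 1))) :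
    Set (EuclideanSpace ℂ (Fin (n + 1))) :=
  {x | ∃ l₀ l₁ : ℂ, ‖l₀‖ = 1 ∧ ‖l₁‖ = 1 ∧ x = l₀ • w₀ + l₁ • w₁}

theorem const_of_deriv_zero {f : ℝ → ℝ} (h : ∀ t, HasDerivAt f 0 t) (t : ℝ) : f t = f 0 :=
  is_const_of_deriv_eq_zero (fun t => (h t).differentiableAt) (fun t => (h t).deriv) t 0

set_option linter.unusedSimpArgs false in
theorem mag_aux {E : Type*} [NormedAddCommGroup E] [InnerProductSpace ℂ E] (s k : ℝ)
    (hk : 0 ≤ 4 * k + s ^ 2) (g g' : ℝ → E) (h1 : ∀ t, HasDerivAt g (g' t) t)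
    (h2 : ∀ t, HasDerivAt g' (((s : ℂ) * Complex.I) • g' t - (k : ℂ) • g t) t)
    (hb : (inner ℂ (g 0) (g' 0)).re = 0)
    (h0 : (inner ℂ (g' 0) (g' 0)).re - s * (inner ℂ (g 0) (g' 0)).im
      - k * (inner ℂ (g 0) (g 0)).re = 0) (t : ℝ) :
    (inner ℂ (g t) (g t)).re = (inner ℂ (g 0) (g 0)).re := by
  have re_d : ∀ {f : ℝ → ℂ} {f' : ℂ} {t : ℝ}, HasDerivAt f f' t →
      HasDerivAt (fun t => (f t).re) f'.re t := fun h =>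
    Complex.reCLM.hasFDerivAt.comp_hasDerivAt _ h
  have im_d : ∀ {f : ℝ → ℂ} {f' : ℂ} {t : ℝ}, HasDerivAt f f' t →
      HasDerivAt (fun t => (f t).im) f'.im t := fun h =>
    Complex.imCLM.hasFDerivAt.comp_hasDerivAt _ h
  have sw_re : ∀ x y : E, (inner ℂ x y).re = (inner ℂ y x).re := fun x y => by
    rw [← inner_conj_symm, Complex.conj_re]
  have sw_im : ∀ x : E, (inner ℂ x x).im = 0 := fun x => inner_self_im (𝕜 := ℂ) x
  set a : ℝ → ℝ := fun t => (inner ℂ (g t) (g t)).re with ha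
  set b : ℝ → ℝ := fun t => (inner ℂ (g t) (g' t)).re with hb'
  set c : ℝ → ℝ := fun t => (inner ℂ (g t) (g' t)).im with hc
  set d : ℝ → ℝ := fun t => (inner ℂ (g' t) (g' t)).re with hd
  have da : ∀ t, HasDerivAt a (2 * b t) t := fun t => by
    convert re_d ((h1 t).inner ℂ (h1 t)) using 1
    simp only [Complex.add_re, hb']
    rw [sw_re (g' t) (g t)]; ring
  have db : ∀ t, HasDerivAt b (d t - s * c t - k * a t) t := fun t => by
    convert re_d ((h1 t).inner ℂ (h2 t)) using 1
    simp only [inner_sub_right, inner_smul_right, inner_sub_left, inner_smul_left, map_mul, Complex.conj_ofReal, Complex.conj_I, Complex.add_re, Complex.sub_re, Complex.mul_re, Complex.add_im, Complex.sub_im, Complex.mul_im, Complex.neg_re, Complex.neg_im, Complex.ofReal_re, Complex.ofReal_im, Complex.I_re, Complex.I_im, ha, hb', hc, hd, sw_im]; ring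
  have dc : ∀ t, HasDerivAt c (s * b t) t := fun t => by
    convert im_d ((h1 t).inner ℂ (h2 t)) using 1
    simp only [inner_sub_right, inner_smul_right, inner_sub_left, inner_smul_left, map_mul, Complex.conj_ofReal, Complex.conj_I, Complex.add_re, Complex.sub_re, Complex.mul_re, Complex.add_im, Complex.sub_im, Complex.mul_im, Complex.neg_re, Complex.neg_im, Complex.ofReal_re, Complex.ofReal_im, Complex.I_re, Complex.I_im, ha, hb', hc, hd, sw_im]; ring
  have dd : ∀ t, HasDerivAt d (-2 * k * b t) t := fun t => by
    convert re_d ((h2 t).inner ℂ (h2 t)) using 1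
    simp only [inner_sub_right, inner_smul_right, inner_sub_left, inner_smul_left, map_mul, Complex.conj_ofReal, Complex.conj_I, Complex.add_re, Complex.sub_re, Complex.mul_re, Complex.add_im, Complex.sub_im, Complex.mul_im, Complex.neg_re, Complex.neg_im, Complex.ofReal_re, Complex.ofReal_im, Complex.I_re, Complex.I_im, ha, hb', hc, hd, sw_im]
    rw [sw_re (g' t) (g t)]; ring
  have e1 : ∀ t, c t - s / 2 * a t = c 0 - s / 2 * a 0 := const_of_deriv_zero fun t => by
    exact ((dc t).sub ((da t).const_mul (s / 2))).congr_deriv (by ring)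
  have e2 : ∀ t, d t + k * a t = d 0 + k * a 0 := const_of_deriv_zero fun t => by
    exact ((dd t).add ((da t).const_mul k)).congr_deriv (by ring)
  have hb0 : b 0 = 0 := hb
  have h00 : d 0 - s * c 0 - k * a 0 = 0 := h0
  have e3 : ∀ t, 4 * b t ^ 2 + (4 * k + s ^ 2) * (a t - a 0) ^ 2
      = 4 * b 0 ^ 2 + (4 * k + s ^ 2) * (a 0 - a 0) ^ 2 := const_of_deriv_zero fun t => by
    refine ((((db t).pow 2).const_mul 4).add
      ((((da t).sub_const (a 0)).pow 2).const_mul (4 * k + s ^ 2))).congr_deriv ?_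
    have := e1 t
    have := e2 t
    have hct : c t = c 0 + s / 2 * (a t - a 0) := by linarith
    have hdt : d t = d 0 - k * (a t - a 0) := by linarith
    have hd0 : d 0 = s * c 0 + k * a 0 := by linarith
    rw [hct, hdt, hd0]; push_cast; ring
  have b0 : ∀ t, b t = 0 := fun t => by
    have h := e3 t
    rw [hb0] at h
    have := mul_nonneg hk (sq_nonneg (a t - a 0))
    have : b t ^ 2 = 0 := le_antisymm (by nlinarith) (sq_nonneg _)
    simpa using this
  exact const_of_deriv_zero (f := a) (fun t => by simpa [b0 t] using da t) t

/-- every unit-speed magnetic geodesic stays on the unit sphere and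
in the complex span of its initial position and velocity, a complex subspace of
dimension at most 2; hence it is contained in the intersection of `S^{2n+1}` with
a complex plane. -/
theorem stmt_17 {n : ℕ} (s ψ : ℝ) (hs : 0 ≤ s) (hψ : ψ ∈ Set.Icc 0 π)
    (γ : ℝ → EuclideanSpace ℂ (Fin (n + 1))) (hγ : IsMagGeo s ψ γ) :
    ∃ V : Submodule ℂ (EuclideanSpace ℂ (Fin (n + 1))),
      V = Submodule.span ℂ {γ 0, deriv γ 0} ∧
      Module.finrank ℂ V ≤ 2 ∧
      ∀ t : ℝ, γ t ∈ V ∧ ‖γ t‖ = 1 := by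
  obtain ⟨hsm, hode, hn0, hn1, hre, him⟩ := hγ
  have h1 : ∀ t, HasDerivAt γ (deriv γ t) t := fun t =>
    ((hsm.differentiable (by simp)) t).hasDerivAt
  have h2' : ∀ t, HasDerivAt (deriv γ) (deriv (deriv γ) t) t := fun t => by
    have h : ContDiff ℝ 1 (deriv γ) := by
      have h2 : ContDiff ℝ (1 + 1) γ := by
        rw [one_add_one_eq_two]; exact contDiff_infty.1 hsm 2
      exact (contDiff_succ_iff_deriv.1 h2).2.2
    exact ((h.differentiable (by simp)) t).hasDerivAt
  have hkk : ((1 : ℂ) - (s : ℂ) * (Real.cos ψ : ℂ)) = ((1 - s * Real.cos ψ : ℝ) : ℂ) := by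
    push_cast; ring
  have h2 : ∀ t, HasDerivAt (deriv γ) (((s : ℂ) * Complex.I) • deriv γ t
      - ((1 - s * Real.cos ψ : ℝ) : ℂ) • γ t) t := fun t => by
    have h := hode t
    rw [hkk] at h
    convert h2' t using 1
    rw [← sub_eq_zero, ← neg_eq_zero, ← h]; abel
  have hk : 0 ≤ 4 * (1 - s * Real.cos ψ) + s ^ 2 := by
    nlinarith [sq_nonneg (s - 2 * Real.cos ψ), Real.sin_sq_add_cos_sq ψ, sq_nonneg (Real.sin ψ)]
  refine ⟨_, rfl, ?_, fun t => ⟨?_, ?_⟩⟩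
  · classical
    have h := finrank_span_finset_le_card (R := ℂ) ({γ 0, deriv γ 0} : Finset _)
    have h' := Finset.card_le_two (a := γ 0) (b := deriv γ 0)
    simp only [Finset.coe_insert, Finset.coe_singleton] at h
    exact h.trans h'
  · set V := Submodule.span ℂ {γ 0, deriv γ 0} with hV
    rw [← Submodule.orthogonal_orthogonal V, Submodule.mem_orthogonal]
    intro v hv
    rw [Submodule.mem_orthogonal'] at hv
    have v0 : inner ℂ v (γ 0) = 0 := hv _ (Submodule.subset_span (by simp))
    have v1 : inner ℂ v (deriv γ 0) = 0 := hv _ (Submodule.subset_span (by simp))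
    have L : ∀ {f : ℝ → EuclideanSpace ℂ (Fin (n + 1))} {f'} {t : ℝ}, HasDerivAt f f' t →
        HasDerivAt (fun t => inner ℂ v (f t)) (inner ℂ v f') t := fun {f f' t} h => by
      simpa using (hasDerivAt_const t v).inner ℂ h
    have := mag_aux s (1 - s * Real.cos ψ) hk (fun t => inner ℂ v (γ t))
      (fun t => inner ℂ v (deriv γ t)) (fun t => L (h1 t))
      (fun t => by
        have := L (h2 t)
        rw [inner_sub_right, inner_smul_right, inner_smul_right] at this
        exact this) (by simp [v0]) (by simp [v0, v1]) t
    simp only [v0, inner_zero_left, Complex.zero_re] at this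
    exact (inner_self_eq_zero (𝕜 := ℂ)).1 (Complex.ext this
      (inner_self_im (𝕜 := ℂ) (inner ℂ v (γ t))))
  · have nn : ∀ x : EuclideanSpace ℂ (Fin (n + 1)), (inner ℂ x x).re = ‖x‖ ^ 2 := fun x =>
      inner_self_eq_norm_sq (𝕜 := ℂ) x
    have e1 : (inner ℂ (γ 0) (deriv γ 0)).re = 0 := by
      rw [← inner_conj_symm, Complex.conj_re]; simpa [herm] using hre
    have e2 : (inner ℂ (γ 0) (deriv γ 0)).im = Real.cos ψ := by
      rw [← inner_conj_symm, Complex.conj_im]; simpa [herm, inner_smul_right] using him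
    have := mag_aux s (1 - s * Real.cos ψ) hk γ (deriv γ) h1 h2 e1
      (by rw [nn, nn, e2, hn0, hn1]; ring) t
    rw [nn, nn, hn0] at this
    nlinarith [norm_nonneg (γ t)]
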